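/- arXiv:1506.06002 — 3 statements merged into one kernel-verified Lean document; each statement's English description precedes it below -/
import Mathlib

section
/- Fix d ∈ {2,7,11} and let s ∈ ℝ. The vertical translation matrix T_{(0,s)} = [[1,0,is/2],[0,1,0],[0,0,1]] belongs to Γ_s^(d) if and only if s = 2n/√d for some integer n. In other words, the vertical translations contained in the stabilizer of q_∞ in Γ_s^(d) form the infinite cyclic group generated by vertical translation by 2/√d. -/
noncomputable section

open Matrix

/-- The Hermitian form matrix `J`. -/
def matJ : Matrix (Fin 3) (Fin 3) ℂ := !![0,0,1; 0,1,0; 1,0,0]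

/-- Membership in `U(2,1;J)`. -/
def inU21 (M : Matrix (Fin 3) (Fin 3) ℂ) : Prop := IsUnit M ∧ Mᴴ * matJ * M = matJ

/-- `i√d`. -/
def isqd (d : ℕ) : ℂ := Complex.I * (Real.sqrt d : ℂ)

/-- The ℤ-module generator of `O_d` over `ℤ`: `ω_d = (1+i√d)/2` if `d ≡ 3 (mod 4)`,
and `i√d` otherwise. -/
def OdGen (d : ℕ) : ℂ :=
  if d % 4 = 3 then (1 + Complex.I * (Real.sqrt d : ℂ)) / 2
  else Complex.I * (Real.sqrt d : ℂ)

/-- Membership in the ring of integers `O_d`. -/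
def inOd (d : ℕ) (z : ℂ) : Prop := ∃ a b : ℤ, z = (a : ℂ) + (b : ℂ) * OdGen d

/-- The sister group `Γ_s^(d)`. -/
def GammaSd (d : ℕ) (M : Matrix (Fin 3) (Fin 3) ℂ) : Prop :=
  inU21 M ∧ inOd d (M 0 0) ∧ inOd d (M 0 1) ∧ inOd d (M 1 1) ∧ inOd d (M 1 2) ∧
    inOd d (M 2 2) ∧ inOd d (isqd d * M 0 2) ∧ inOd d (M 1 0 / isqd d) ∧
    inOd d (M 2 0 / isqd d) ∧ inOd d (M 2 1 / isqd d)

/-!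
The matrix with top right entry `t` is the transvection `1 + t E₁₃`. Changing basis by it in the
form `J` adds `2 Re t` to the lower right entry, and its only nontrivial integrality condition
is `i√d · t ∈ O_d`. For `t = is/2` the real part vanishes and `i√d · t = -√d s / 2` is real. Since
`O_d` is spanned over `ℤ` by `1` and a non-real number, its real elements are the integers.
-/

theorem odGen_im_ne_zero {d : ℕ} (hd : 0 < d) : (OdGen d).im ≠ 0 := by
  have hsqrt : √(d : ℝ) ≠ 0 := Real.sqrt_ne_zero'.mpr (Nat.cast_pos.mpr hd)
  unfold OdGen
  split_ifs <;> simpa using hsqrt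

theorem inOd_intCast (d : ℕ) (n : ℤ) : inOd d n :=
  ⟨n, 0, by simp⟩

theorem inOd_zero (d : ℕ) : inOd d 0 := by
  exact_mod_cast inOd_intCast d 0

theorem inOd_one (d : ℕ) : inOd d 1 := by
  exact_mod_cast inOd_intCast d 1

theorem inOd_ofReal_iff {d : ℕ} (hd : 0 < d) {x : ℝ} :
    inOd d (x : ℂ) ↔ ∃ n : ℤ, x = n := by
  constructor
  · rintro ⟨a, b, hab⟩
    have him : (b : ℝ) * (OdGen d).im = 0 := by
      simpa using (congrArg Complex.im hab).symm
    have hb : b = 0 := by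
      exact_mod_cast (mul_eq_zero.mp him).resolve_right (odGen_im_ne_zero hd)
    refine ⟨a, ?_⟩
    simpa [hb] using congrArg Complex.re hab
  · rintro ⟨n, rfl⟩
    exact_mod_cast inOd_intCast d n

theorem matrix_single_eq_zero_iff {m n α : Type*} [DecidableEq m] [DecidableEq n] [Zero α]
    {i : m} {j : n} {a : α} : single i j a = 0 ↔ a = 0 := by
  refine ⟨fun h => ?_, fun h => by rw [h, single_zero]⟩
  simpa using congrFun₂ h i j

theorem conjTranspose_transvection_mul_matJ_mul_transvection (t : ℂ) :
    (transvection (0 : Fin 3) 2 t)ᴴ * matJ * transvection 0 2 t =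
      matJ + single 2 2 (t + star t) := by
  ext i j
  fin_cases i <;> fin_cases j <;>
    simp [matJ, transvection, Matrix.mul_apply, Fin.sum_univ_three, single_apply]

theorem inU21_transvection_iff {t : ℂ} :
    inU21 (transvection 0 2 t) ↔ t.re = 0 := by
  have hunit : IsUnit (transvection (0 : Fin 3) 2 t) := by
    simp [isUnit_iff_isUnit_det, det_transvection_of_ne]
  rw [inU21, and_iff_right hunit, conjTranspose_transvection_mul_matJ_mul_transvection,
    add_eq_left, matrix_single_eq_zero_iff, Complex.star_def, Complex.add_conj]
  simp

theorem gammaSd_transvection_iff {d : ℕ} {t : ℂ} :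
    GammaSd d (transvection 0 2 t) ↔ t.re = 0 ∧ inOd d (isqd d * t) := by
  rw [GammaSd, inU21_transvection_iff]
  simp [transvection, inOd_zero, inOd_one]

theorem transvection_zero_two (t : ℂ) :
    transvection (0 : Fin 3) 2 t = !![1, 0, t; 0, 1, 0; 0, 0, 1] := by
  ext i j
  fin_cases i <;> fin_cases j <;> simp [transvection]

theorem isqd_mul_I_mul_div_two (d : ℕ) (s : ℝ) :
    isqd d * (Complex.I * s / 2) = ((-(√d * s / 2) : ℝ) : ℂ) := by
  unfold isqd
  push_cast
  linear_combination (√d * s / 2 : ℂ) * Complex.I_sq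

theorem exists_neg_mul_div_two_eq_intCast_iff {r : ℝ} (hr : r ≠ 0) {s : ℝ} :
    (∃ n : ℤ, -(r * s / 2) = n) ↔ ∃ n : ℤ, s = 2 * n / r := by
  rw [← (Equiv.neg ℤ).exists_congr_right]
  refine exists_congr fun n => ?_
  rw [Equiv.neg_apply, Int.cast_neg, neg_inj, eq_div_iff hr]
  constructor <;> intro h <;> linarith

theorem vertical_translations_in_gammaSd_general {d : ℕ} (hd : 0 < d) (s : ℝ) :
    GammaSd d !![1, 0, Complex.I * (s : ℂ) / 2; 0, 1, 0; 0, 0, 1] ↔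
      ∃ n : ℤ, s = 2 * n / √d := by
  have hsqrt : √(d : ℝ) ≠ 0 := Real.sqrt_ne_zero'.mpr (Nat.cast_pos.mpr hd)
  have hre : (Complex.I * (s : ℂ) / 2).re = 0 := by simp
  rw [← transvection_zero_two, gammaSd_transvection_iff, and_iff_right hre,
    isqd_mul_I_mul_div_two, inOd_ofReal_iff hd, exists_neg_mul_div_two_eq_intCast_iff hsqrt]

/-- For `d ∈ {2,7,11}`, the vertical translation `T_{(0,s)}` lies in `Γ_s^(d)` iff
`s = 2n/√d` for some integer `n`. -/
theorem vertical_translations_in_gammaSd :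
    ∀ d ∈ ({2, 7, 11} : Set ℕ), ∀ s : ℝ,
      (GammaSd d !![1, 0, Complex.I * (s : ℂ) / 2; 0, 1, 0; 0, 0, 1] ↔
        ∃ n : ℤ, s = 2 * n / Real.sqrt d) := by
  rintro d (rfl | rfl | rfl) s <;>
    exact vertical_translations_in_gammaSd_general (by norm_num) s
end
end

section
/- Fix d ∈ {2,7,11} and let M ∈ Γ_s^(d) fix the point q_∞, i.e. M₂₁ = M₃₁ = 0. Then M is upper triangular (M₃₂ = 0 as well), its diagonal entries satisfy M₁₁ = M₃₃ ∈ {1,−1} and M₂₂ ∈ {1,−1}. In particular the stabilizer of q_∞ in Γ_s^(d) contains no Heisenberg dilations. -/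
noncomputable section

open Matrix

/-!
When `d ≠ 1, 3` the lattice `O_d` has a generator of imaginary part greater than `1`, so its only
nonzero points in the closed unit disc are `1` and `-1`. Preserving `J` forces a matrix fixing
`q_∞` to be upper triangular with `conj M₁₁ * M₃₃ = 1` and `conj M₂₂ * M₂₂ = 1`. In each of these
products some factor lies in the closed unit disc, hence is `±1`, and it determines the other.
-/

theorem one_lt_im_OdGen {d : ℕ} (hd : 1 < d) (hd3 : d ≠ 3) : 1 < (OdGen d).im := by
  by_cases hmod : d % 4 = 3
  · have hd4 : (2 : ℝ) ^ 2 < d := by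
      norm_num
      exact_mod_cast (by omega : 4 < d)
    have hsqrt : 2 < Real.sqrt d := Real.lt_sqrt_of_sq_lt hd4
    have him : (OdGen d).im = Real.sqrt d / 2 := by simp [OdGen, hmod]
    linarith
  · have hsqrt : 1 < Real.sqrt d := Real.lt_sqrt_of_sq_lt (by simpa using hd)
    simpa [OdGen, hmod] using hsqrt

theorem intCast_add_intCast_mul_eq_one_or_neg_one {ω : ℂ} (hω : 1 < ω.im) {a b : ℤ}
    (hne : (a + b * ω : ℂ) ≠ 0) (hnorm : ‖(a + b * ω : ℂ)‖ ≤ 1) :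
    (a + b * ω : ℂ) = 1 ∨ (a + b * ω : ℂ) = -1 := by
  have him : |(b : ℝ)| * ω.im ≤ 1 := by
    calc |(b : ℝ)| * ω.im = |(a + b * ω : ℂ).im| := by simp [abs_mul, abs_of_pos (one_pos.trans hω)]
      _ ≤ ‖(a + b * ω : ℂ)‖ := Complex.abs_im_le_norm _
      _ ≤ 1 := hnorm
  have hb : b = 0 := by
    by_contra hb
    have hb1 : 1 ≤ |(b : ℝ)| := by exact_mod_cast Int.one_le_abs hb
    nlinarith
  subst hb
  have ha0 : a ≠ 0 := by simpa using hne
  have ha1 : |a| ≤ 1 := by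
    have ha : |(a : ℝ)| ≤ 1 := by simpa using hnorm
    exact_mod_cast ha
  have ha : a = 1 ∨ a = -1 := eq_or_eq_neg_of_abs_eq (le_antisymm ha1 (Int.one_le_abs ha0))
  rcases ha with rfl | rfl <;> simp

theorem inOd.eq_one_or_neg_one_of_norm_le_one {d : ℕ} (hd : 1 < d) (hd3 : d ≠ 3) {z : ℂ}
    (hz : inOd d z) (hne : z ≠ 0) (hnorm : ‖z‖ ≤ 1) : z = 1 ∨ z = -1 := by
  obtain ⟨a, b, rfl⟩ := hz
  exact intCast_add_intCast_mul_eq_one_or_neg_one (one_lt_im_OdGen hd hd3) hne hnorm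

theorem inOd.eq_and_eq_one_or_neg_one_of_star_mul_eq_one {d : ℕ} (hd : 1 < d) (hd3 : d ≠ 3)
    {z w : ℂ} (hz : inOd d z) (hw : inOd d w) (hzw : star z * w = 1) :
    z = w ∧ (z = 1 ∨ z = -1) := by
  have hz0 : z ≠ 0 := star_ne_zero.mp (left_ne_zero_of_mul_eq_one hzw)
  have hw0 : w ≠ 0 := right_ne_zero_of_mul_eq_one hzw
  have hnorm : ‖z‖ * ‖w‖ = 1 := by simpa using congrArg norm hzw
  rcases le_or_gt ‖z‖ 1 with hz1 | hz1
  · rcases hz.eq_one_or_neg_one_of_norm_le_one hd hd3 hz0 hz1 with rfl | rfl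
    · simpa [eq_comm] using hzw
    · simpa [neg_eq_iff_eq_neg, eq_comm] using hzw
  · have hw1 : ‖w‖ ≤ 1 := by nlinarith [norm_nonneg w]
    rcases hw.eq_one_or_neg_one_of_norm_le_one hd hd3 hw0 hw1 with rfl | rfl
    · have hz_eq : z = 1 := by simpa using congrArg star hzw
      simp [hz_eq]
    · have hz_eq : z = -1 := by simpa [neg_eq_iff_eq_neg] using congrArg star hzw
      simp [hz_eq]

namespace inU21

variable {M : Matrix (Fin 3) (Fin 3) ℂ}

theorem sum_star_mul_eq_matJ (hM : inU21 M) (i j : Fin 3) :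
    star (M 0 i) * M 2 j + star (M 1 i) * M 1 j + star (M 2 i) * M 0 j = matJ i j := by
  rw [← congrFun₂ hM.2 i j]
  simp only [matJ, mul_apply, Fin.sum_univ_three, conjTranspose_apply, of_apply, cons_val]
  ring

theorem apply_one_zero_eq_zero (hM : inU21 M) (h20 : M 2 0 = 0) : M 1 0 = 0 := by
  simpa [h20, matJ] using hM.sum_star_mul_eq_matJ 0 0

theorem star_apply_zero_zero_mul_apply_two_two (hM : inU21 M) (h20 : M 2 0 = 0) :
    star (M 0 0) * M 2 2 = 1 := by
  simpa [h20, hM.apply_one_zero_eq_zero h20, matJ] using hM.sum_star_mul_eq_matJ 0 2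

theorem apply_two_one_eq_zero (hM : inU21 M) (h20 : M 2 0 = 0) : M 2 1 = 0 := by
  have h00 : star (M 0 0) ≠ 0 :=
    left_ne_zero_of_mul_eq_one (hM.star_apply_zero_zero_mul_apply_two_two h20)
  have hmul : star (M 0 0) * M 2 1 = 0 := by
    simpa [h20, hM.apply_one_zero_eq_zero h20, matJ] using hM.sum_star_mul_eq_matJ 0 1
  exact (mul_eq_zero_iff_left h00).mp hmul

theorem star_apply_one_one_mul_self (hM : inU21 M) (h20 : M 2 0 = 0) :
    star (M 1 1) * M 1 1 = 1 := by
  simpa [hM.apply_two_one_eq_zero h20, matJ] using hM.sum_star_mul_eq_matJ 1 1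

end inU21

theorem GammaSd.inOd_diag {d : ℕ} {M : Matrix (Fin 3) (Fin 3) ℂ} (hM : GammaSd d M) (i : Fin 3) :
    inOd d (M i i) := by
  obtain ⟨-, h00, -, h11, -, h22, -⟩ := hM
  fin_cases i
  exacts [h00, h11, h22]

theorem gammaSd_stabilizer_structure_general {d : ℕ} (hd : 1 < d) (hd3 : d ≠ 3)
    {M : Matrix (Fin 3) (Fin 3) ℂ} (hM : inU21 M) (hdiag : ∀ i, inOd d (M i i))
    (h20 : M 2 0 = 0) :
    M 2 1 = 0 ∧ M 0 0 = M 2 2 ∧ (M 0 0 = 1 ∨ M 0 0 = -1) ∧ (M 1 1 = 1 ∨ M 1 1 = -1) := by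
  obtain ⟨h_eq, h00⟩ := (hdiag 0).eq_and_eq_one_or_neg_one_of_star_mul_eq_one hd hd3 (hdiag 2)
    (hM.star_apply_zero_zero_mul_apply_two_two h20)
  obtain ⟨-, h11⟩ := (hdiag 1).eq_and_eq_one_or_neg_one_of_star_mul_eq_one hd hd3 (hdiag 1)
    (hM.star_apply_one_one_mul_self h20)
  exact ⟨hM.apply_two_one_eq_zero h20, h_eq, h00, h11⟩

/-- For `d ∈ {2,7,11}`, every element of `Γ_s^(d)` fixing `q_∞` (i.e. with
`M₂₁ = M₃₁ = 0`) is upper triangular with diagonal entries `M₁₁ = M₃₃ ∈ {1,−1}` and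
`M₂₂ ∈ {1,−1}`; in particular the stabilizer of `q_∞` contains no Heisenberg dilations. -/
theorem gammaSd_stabilizer_structure :
    ∀ d ∈ ({2, 7, 11} : Set ℕ),
      ∀ M : Matrix (Fin 3) (Fin 3) ℂ, GammaSd d M → M 1 0 = 0 → M 2 0 = 0 →
        M 2 1 = 0 ∧ M 0 0 = M 2 2 ∧ (M 0 0 = 1 ∨ M 0 0 = -1) ∧
        (M 1 1 = 1 ∨ M 1 1 = -1) := by
  rintro d (rfl | rfl | rfl) M hM - h20 <;>
    exact gammaSd_stabilizer_structure_general (by norm_num) (by norm_num) hM.1 hM.inOd_diag h20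
end
end

section
/- Every M ∈ Γ_s^(11) with M₂₁ = M₃₁ = 0 can be written as ε·W, where ε ∈ {1,−1} and W is a finite product of the matrices R₁ = [[1,0,0],[0,−1,0],[0,0,1]], R₂ = [[1,1,iω₁₁/√11],[0,−1,1],[0,0,1]], R₃ = [[1,ω̄₁₁,i(−1+3ω₁₁)/√11],[0,−1,ω₁₁],[0,0,1]], T = [[1,0,i/√11],[0,1,0],[0,0,1]] and their inverses, where ω₁₁ = (1+i√11)/2. In other words, the stabilizer of q_∞ in Γ_s^(11) is generated, modulo ±I, by R₁, R₂, R₃ and T. -/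
noncomputable section

open Matrix

/-- `i√11`. -/
def isq11 : ℂ := Complex.I * (Real.sqrt 11 : ℂ)

/-- `ω₁₁ = (1 + i√11)/2`. -/
def ω₁₁ : ℂ := (1 + Complex.I * (Real.sqrt 11 : ℂ)) / 2

/-- Membership in the ring of integers `O₁₁ = ℤ + ℤ·ω₁₁`. -/
def inO11 (z : ℂ) : Prop := ∃ a b : ℤ, z = (a : ℂ) + (b : ℂ) * ω₁₁

/-- The sister group `Γ_s^(11)`. -/
def GammaS11 (M : Matrix (Fin 3) (Fin 3) ℂ) : Prop :=
  inU21 M ∧ inO11 (M 0 0) ∧ inO11 (M 0 1) ∧ inO11 (M 1 1) ∧ inO11 (M 1 2) ∧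
    inO11 (M 2 2) ∧ inO11 (isq11 * M 0 2) ∧ inO11 (M 1 0 / isq11) ∧
    inO11 (M 2 0 / isq11) ∧ inO11 (M 2 1 / isq11)

def R₁ : Matrix (Fin 3) (Fin 3) ℂ := !![1,0,0; 0,-1,0; 0,0,1]

def R₂ : Matrix (Fin 3) (Fin 3) ℂ :=
  !![1, 1, Complex.I * ω₁₁ / (Real.sqrt 11 : ℂ); 0, -1, 1; 0, 0, 1]

def R₃ : Matrix (Fin 3) (Fin 3) ℂ :=
  !![1, (starRingEnd ℂ) ω₁₁, Complex.I * (-1 + 3 * ω₁₁) / (Real.sqrt 11 : ℂ);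
     0, -1, ω₁₁; 0, 0, 1]

def T : Matrix (Fin 3) (Fin 3) ℂ :=
  !![1, 0, Complex.I / (Real.sqrt 11 : ℂ); 0, 1, 0; 0, 0, 1]

/-! Elements of the stabilizer of `q_∞` are upper triangular, and the units of `O₁₁` are `±1`, so up
to sign such an element is a Heisenberg translation `N(z, t)`, possibly multiplied by `R₁`. Modulo
the centre `{N(0, t)}` a translation is determined by `z ∈ O₁₁ = ℤ + ℤ ω₁₁`, and `R₁ R₂`, `R₁ R₃`
project to `-1`, `-ω₁₁`. What remains is a central element; integrality and unitarity make it a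
power of `T`. -/

section Heisenberg

variable {R : Type*} [CommRing R] [StarRing R]

/-- The Heisenberg translation `N(z, t)`. Over `ℂ` it preserves the form `matJ` exactly when
`t + conj t = -|z|²`; this condition is not part of the definition. -/
def heisenberg (z t : R) : Matrix (Fin 3) (Fin 3) R :=
  !![1, -starRingEnd R z, t; 0, 1, z; 0, 0, 1]

lemma heisenberg_zero_zero : heisenberg (0 : R) 0 = 1 := by
  simp [heisenberg, Matrix.one_fin_three]

lemma heisenberg_mul (z t w s : R) :
    heisenberg z t * heisenberg w s = heisenberg (z + w) (t + s - starRingEnd R z * w) := by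
  ext i j
  fin_cases i <;> fin_cases j <;>
    simp [heisenberg, Matrix.mul_apply, Fin.sum_univ_three] <;> ring

lemma heisenberg_inv (z t : R) :
    (heisenberg z t)⁻¹ = heisenberg (-z) (-t - starRingEnd R z * z) := by
  apply Matrix.inv_eq_right_inv
  rw [heisenberg_mul, ← heisenberg_zero_zero]
  congr 1 <;> ring

end Heisenberg

lemma inv_mem_submonoidClosure {n R : Type*} [Fintype n] [DecidableEq n] [CommRing R]
    {s : Set (Matrix n n R)} (hs : ∀ A ∈ s, A⁻¹ ∈ s) {A : Matrix n n R}
    (hA : A ∈ Submonoid.closure s) : A⁻¹ ∈ Submonoid.closure s := by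
  induction hA using Submonoid.closure_induction with
  | mem A hA => exact Submonoid.subset_closure (hs A hA)
  | one => rw [inv_one]; exact one_mem _
  | mul A B _ _ ihA ihB => rw [Matrix.mul_inv_rev]; exact mul_mem ihB ihA

lemma isq11_mul_self : isq11 * isq11 = -11 := by
  have sqrt_sq : ((√11 : ℝ) : ℂ) * (√11 : ℝ) = 11 := by
    rw [← Complex.ofReal_mul, Real.mul_self_sqrt (by norm_num)]
    norm_num
  unfold isq11
  linear_combination Complex.I * Complex.I * sqrt_sq + 11 * Complex.I_mul_I

lemma isq11_ne_zero : isq11 ≠ 0 := by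
  intro h
  simpa [h] using isq11_mul_self

lemma conj_isq11 : starRingEnd ℂ isq11 = -isq11 := by
  simp [isq11]

lemma isq11_eq : isq11 = 2 * ω₁₁ - 1 := by
  unfold isq11 ω₁₁
  ring

lemma ω₁₁_mul_self : ω₁₁ * ω₁₁ = ω₁₁ - 3 := by
  linear_combination (1 / 4) * isq11_mul_self - (isq11 + 2 * ω₁₁ - 1) / 4 * isq11_eq

lemma conj_ω₁₁ : starRingEnd ℂ ω₁₁ = 1 - ω₁₁ := by
  have h := conj_isq11
  simp only [isq11_eq, map_sub, map_mul, map_one, map_ofNat] at h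
  linear_combination h / 2

lemma I_div_sqrt_eleven_eq : Complex.I / (√11 : ℝ) = -1 / isq11 := by
  have sqrt_ne : ((√11 : ℝ) : ℂ) ≠ 0 := right_ne_zero_of_mul isq11_ne_zero
  rw [div_eq_div_iff sqrt_ne isq11_ne_zero]
  unfold isq11
  linear_combination (√11 : ℝ) * Complex.I_mul_I

/-- The ring of integers `O₁₁`, with `inO11` as membership predicate. -/
def O₁₁ : Subring ℂ where
  carrier := {z | inO11 z}
  zero_mem' := ⟨0, 0, by simp⟩
  one_mem' := ⟨1, 0, by simp⟩
  add_mem' := by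
    rintro _ _ ⟨a, b, rfl⟩ ⟨c, d, rfl⟩
    exact ⟨a + c, b + d, by push_cast; ring⟩
  neg_mem' := by
    rintro _ ⟨a, b, rfl⟩
    exact ⟨-a, -b, by push_cast; ring⟩
  mul_mem' := by
    rintro _ _ ⟨a, b, rfl⟩ ⟨c, d, rfl⟩
    exact ⟨a * c - 3 * b * d, a * d + b * c + b * d, by
      push_cast; linear_combination b * d * ω₁₁_mul_self⟩

lemma ω₁₁_mem : ω₁₁ ∈ O₁₁ := ⟨0, 1, by simp⟩

lemma isq11_mem : isq11 ∈ O₁₁ := by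
  rw [isq11_eq]
  exact sub_mem (mul_mem (ofNat_mem O₁₁ 2) ω₁₁_mem) (one_mem _)

lemma conj_mem_O₁₁ {z : ℂ} (hz : z ∈ O₁₁) : starRingEnd ℂ z ∈ O₁₁ := by
  obtain ⟨a, b, rfl⟩ := hz
  exact ⟨a + b, -b, by simp only [map_add, map_mul, map_intCast, conj_ω₁₁]; push_cast; ring⟩

lemma exists_int_eq_of_conj_eq {z : ℂ} (hz : z ∈ O₁₁) (hconj : starRingEnd ℂ z = z) :
    ∃ n : ℤ, z = n := by
  obtain ⟨a, b, rfl⟩ := hz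
  simp only [map_add, map_mul, map_intCast, conj_ω₁₁] at hconj
  have b_eq_zero : (b : ℂ) = 0 := by
    refine (mul_eq_zero.1 ?_).resolve_right isq11_ne_zero
    linear_combination b * isq11_eq - hconj
  exact ⟨a, by simp [b_eq_zero]⟩

lemma conj_mul_self_add_mul_ω₁₁ (a b : ℤ) :
    starRingEnd ℂ (a + b * ω₁₁) * (a + b * ω₁₁) = ((a ^ 2 + a * b + 3 * b ^ 2 : ℤ) : ℂ) := by
  simp only [map_add, map_mul, map_intCast, conj_ω₁₁]
  push_cast
  linear_combination -(b : ℂ) ^ 2 * ω₁₁_mul_self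

lemma exists_nat_conj_mul_self {z : ℂ} (hz : z ∈ O₁₁) : ∃ n : ℕ, starRingEnd ℂ z * z = n := by
  obtain ⟨a, b, rfl⟩ := hz
  have norm_nonneg : 0 ≤ a ^ 2 + a * b + 3 * b ^ 2 := by
    nlinarith [sq_nonneg (2 * a + b), sq_nonneg b]
  lift a ^ 2 + a * b + 3 * b ^ 2 to ℕ using norm_nonneg with n hn
  exact ⟨n, by rw [conj_mul_self_add_mul_ω₁₁, ← hn, Int.cast_natCast]⟩

lemma eq_one_or_neg_one_of_conj_mul_self {z : ℂ} (hz : z ∈ O₁₁)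
    (hnorm : starRingEnd ℂ z * z = 1) : z = 1 ∨ z = -1 := by
  obtain ⟨a, b, rfl⟩ := hz
  have norm_eq : a ^ 2 + a * b + 3 * b ^ 2 = 1 := by
    rw [conj_mul_self_add_mul_ω₁₁] at hnorm
    exact_mod_cast hnorm
  have b_eq_zero : b = 0 := by
    have : b ^ 2 < 1 := by nlinarith [sq_nonneg (2 * a + b), sq_nonneg b]
    simpa using this
  have a_eq : a = 1 ∨ a = -1 := by simpa [b_eq_zero] using norm_eq
  rcases a_eq with rfl | rfl <;> simp [b_eq_zero]

lemma eq_one_or_neg_one_of_conj_mul {z w : ℂ} (hz : z ∈ O₁₁) (hw : w ∈ O₁₁)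
    (h : starRingEnd ℂ z * w = 1) : z = 1 ∨ z = -1 := by
  obtain ⟨m, hm⟩ := exists_nat_conj_mul_self hz
  obtain ⟨n, hn⟩ := exists_nat_conj_mul_self hw
  have norm_mul : m * n = 1 := by
    have hconj : z * starRingEnd ℂ w = 1 := by
      simpa using congrArg (starRingEnd ℂ) h
    have : (m * n : ℂ) = 1 := by
      rw [← hm, ← hn]
      linear_combination z * starRingEnd ℂ w * h + hconj
    exact_mod_cast this
  apply eq_one_or_neg_one_of_conj_mul_self hz
  rw [hm, Nat.eq_one_of_mul_eq_one_right norm_mul, Nat.cast_one]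

/-- The parameters `(z, t)` of the Heisenberg translations lying in `Γ_s^(11)`. -/
structure IsLatticeTranslation (z t : ℂ) : Prop where
  horizontal_mem : z ∈ O₁₁
  vertical_mem : isq11 * t ∈ O₁₁
  add_conj : t + starRingEnd ℂ t = -(starRingEnd ℂ z * z)

namespace IsLatticeTranslation

variable {z t w s : ℂ}

lemma mul (h : IsLatticeTranslation z t) (k : IsLatticeTranslation w s) :
    IsLatticeTranslation (z + w) (t + s - starRingEnd ℂ z * w) where
  horizontal_mem := add_mem h.horizontal_mem k.horizontal_mem
  vertical_mem := by
    rw [mul_sub, mul_add]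
    exact sub_mem (add_mem h.vertical_mem k.vertical_mem)
      (mul_mem isq11_mem (mul_mem (conj_mem_O₁₁ h.horizontal_mem) k.horizontal_mem))
  add_conj := by
    simp only [map_add, map_sub, map_mul, Complex.conj_conj]
    linear_combination h.add_conj + k.add_conj

lemma inv (h : IsLatticeTranslation z t) :
    IsLatticeTranslation (-z) (-t - starRingEnd ℂ z * z) where
  horizontal_mem := neg_mem h.horizontal_mem
  vertical_mem := by
    rw [mul_sub, mul_neg]
    exact sub_mem (neg_mem h.vertical_mem)
      (mul_mem isq11_mem (mul_mem (conj_mem_O₁₁ h.horizontal_mem) h.horizontal_mem))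
  add_conj := by
    simp only [map_neg, map_sub, map_mul, Complex.conj_conj]
    linear_combination -h.add_conj

lemma exists_int_sub_eq (h : IsLatticeTranslation z t) (k : IsLatticeTranslation z s) :
    ∃ n : ℤ, t - s = n • (Complex.I / (√11 : ℝ)) := by
  have mem : isq11 * (t - s) ∈ O₁₁ := by
    rw [mul_sub]
    exact sub_mem h.vertical_mem k.vertical_mem
  have real : starRingEnd ℂ (isq11 * (t - s)) = isq11 * (t - s) := by
    simp only [map_mul, map_sub, conj_isq11]
    linear_combination isq11 * (k.add_conj - h.add_conj)
  obtain ⟨n, hn⟩ := exists_int_eq_of_conj_eq mem real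
  refine ⟨-n, mul_left_cancel₀ isq11_ne_zero ?_⟩
  rw [hn, I_div_sqrt_eleven_eq, zsmul_eq_mul, mul_left_comm, mul_div_cancel₀ _ isq11_ne_zero]
  simp

end IsLatticeTranslation

lemma T_eq_heisenberg : T = heisenberg 0 (Complex.I / (√11 : ℝ)) := by
  simp [T, heisenberg]

lemma R₁_mul_R₂_eq_heisenberg : R₁ * R₂ = heisenberg (-1) (-ω₁₁ / isq11) := by
  have corner : Complex.I * ω₁₁ / (√11 : ℝ) = -ω₁₁ / isq11 := by
    linear_combination ω₁₁ * I_div_sqrt_eleven_eq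
  simp [R₁, R₂, heisenberg, corner]

lemma R₁_mul_R₃_eq_heisenberg : R₁ * R₃ = heisenberg (-ω₁₁) ((1 - 3 * ω₁₁) / isq11) := by
  have corner : Complex.I * (-1 + 3 * ω₁₁) / (√11 : ℝ) = (1 - 3 * ω₁₁) / isq11 := by
    linear_combination (-1 + 3 * ω₁₁) * I_div_sqrt_eleven_eq
  simp [R₁, R₃, heisenberg, corner]

lemma isLatticeTranslation_R₁_mul_R₂ : IsLatticeTranslation (-1) (-ω₁₁ / isq11) where
  horizontal_mem := neg_mem (one_mem _)
  vertical_mem := by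
    rw [mul_div_cancel₀ _ isq11_ne_zero]
    exact neg_mem ω₁₁_mem
  add_conj := by
    have := isq11_ne_zero
    simp only [map_div₀, map_neg, map_one, conj_ω₁₁, conj_isq11]
    field_simp
    linear_combination isq11_eq

lemma isLatticeTranslation_R₁_mul_R₃ :
    IsLatticeTranslation (-ω₁₁) ((1 - 3 * ω₁₁) / isq11) where
  horizontal_mem := neg_mem ω₁₁_mem
  vertical_mem := by
    rw [mul_div_cancel₀ _ isq11_ne_zero]
    exact sub_mem (one_mem _) (mul_mem (ofNat_mem O₁₁ 3) ω₁₁_mem)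
  add_conj := by
    have := isq11_ne_zero
    simp only [map_div₀, map_neg, map_sub, map_mul, map_one, map_ofNat, conj_ω₁₁, conj_isq11]
    field_simp
    linear_combination 3 * isq11_eq - isq11 * ω₁₁_mul_self

/-- The generators of the stabilizer together with their inverses. -/
def generators : Set (Matrix (Fin 3) (Fin 3) ℂ) :=
  {R₁, R₂, R₃, T, R₁⁻¹, R₂⁻¹, R₃⁻¹, T⁻¹}

/-- The words in `R₁`, `R₂`, `R₃`, `T` and their inverses: a group, encoded as a submonoid because
the generators are given as matrices rather than as units. -/
def generatedMonoid : Submonoid (Matrix (Fin 3) (Fin 3) ℂ) := Submonoid.closure generators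

lemma mem_generatedMonoid {A : Matrix (Fin 3) (Fin 3) ℂ} (hA : A ∈ generators) :
    A ∈ generatedMonoid :=
  Submonoid.subset_closure hA

lemma inv_mem_generators (A : Matrix (Fin 3) (Fin 3) ℂ) (hA : A ∈ generators) :
    A⁻¹ ∈ generators := by
  have inv_inv_R₁ : R₁⁻¹⁻¹ = R₁ := nonsing_inv_nonsing_inv _ (by simp [R₁, det_fin_three])
  have inv_inv_R₂ : R₂⁻¹⁻¹ = R₂ := nonsing_inv_nonsing_inv _ (by simp [R₂, det_fin_three])
  have inv_inv_R₃ : R₃⁻¹⁻¹ = R₃ := nonsing_inv_nonsing_inv _ (by simp [R₃, det_fin_three])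
  have inv_inv_T : T⁻¹⁻¹ = T := nonsing_inv_nonsing_inv _ (by simp [T, det_fin_three])
  rcases hA with rfl | rfl | rfl | rfl | rfl | rfl | rfl | rfl <;> simp [generators, *]

lemma inv_mem_generatedMonoid {A : Matrix (Fin 3) (Fin 3) ℂ} (hA : A ∈ generatedMonoid) :
    A⁻¹ ∈ generatedMonoid :=
  inv_mem_submonoidClosure inv_mem_generators hA

/-- The central translations `N(0, t)` that are words in the generators. -/
def verticalLattice : AddSubgroup ℂ where
  carrier := {t | heisenberg 0 t ∈ generatedMonoid}
  zero_mem' := by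
    change heisenberg 0 0 ∈ generatedMonoid
    rw [heisenberg_zero_zero]
    exact one_mem _
  add_mem' {t s} (ht : heisenberg 0 t ∈ _) (hs : heisenberg 0 s ∈ _) := by
    simpa [heisenberg_mul] using mul_mem ht hs
  neg_mem' {t} ht := by simpa [heisenberg_inv] using inv_mem_generatedMonoid ht

/-- The image in `ℂ` of the lattice translations that are words in the generators. -/
def horizontalLattice : AddSubgroup ℂ where
  carrier := {z | ∃ t, IsLatticeTranslation z t ∧ heisenberg z t ∈ generatedMonoid}
  zero_mem' := ⟨0, ⟨zero_mem _, by simp, by simp⟩, verticalLattice.zero_mem⟩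
  add_mem' := by
    rintro z w ⟨t, ht, ht_mem⟩ ⟨s, hs, hs_mem⟩
    exact ⟨_, ht.mul hs, heisenberg_mul z t w s ▸ mul_mem ht_mem hs_mem⟩
  neg_mem' := by
    rintro z ⟨t, ht, ht_mem⟩
    exact ⟨_, ht.inv, heisenberg_inv z t ▸ inv_mem_generatedMonoid ht_mem⟩

lemma I_div_sqrt_eleven_mem_verticalLattice : Complex.I / (√11 : ℝ) ∈ verticalLattice := by
  change heisenberg 0 _ ∈ generatedMonoid
  rw [← T_eq_heisenberg]
  exact mem_generatedMonoid (by simp [generators])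

lemma one_mem_horizontalLattice : 1 ∈ horizontalLattice :=
  neg_mem_iff.1 ⟨_, isLatticeTranslation_R₁_mul_R₂, R₁_mul_R₂_eq_heisenberg ▸
    mul_mem (mem_generatedMonoid (by simp [generators]))
      (mem_generatedMonoid (by simp [generators]))⟩

lemma ω₁₁_mem_horizontalLattice : ω₁₁ ∈ horizontalLattice :=
  neg_mem_iff.1 ⟨_, isLatticeTranslation_R₁_mul_R₃, R₁_mul_R₃_eq_heisenberg ▸
    mul_mem (mem_generatedMonoid (by simp [generators]))
      (mem_generatedMonoid (by simp [generators]))⟩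

lemma mem_horizontalLattice_of_mem_O₁₁ {z : ℂ} (hz : z ∈ O₁₁) : z ∈ horizontalLattice := by
  obtain ⟨a, b, rfl⟩ := hz
  simpa using add_mem (zsmul_mem one_mem_horizontalLattice a)
    (zsmul_mem ω₁₁_mem_horizontalLattice b)

theorem IsLatticeTranslation.heisenberg_mem {z t : ℂ} (h : IsLatticeTranslation z t) :
    heisenberg z t ∈ generatedMonoid := by
  obtain ⟨s, hs, hs_mem⟩ := mem_horizontalLattice_of_mem_O₁₁ h.horizontal_mem
  obtain ⟨n, hn⟩ := h.exists_int_sub_eq hs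
  have central_mem : heisenberg 0 (t - s) ∈ generatedMonoid :=
    hn ▸ zsmul_mem I_div_sqrt_eleven_mem_verticalLattice n
  simpa [heisenberg_mul] using mul_mem hs_mem central_mem

lemma inU21.apply_eq {M : Matrix (Fin 3) (Fin 3) ℂ} (hM : inU21 M) (i j : Fin 3) :
    starRingEnd ℂ (M 2 i) * M 0 j + starRingEnd ℂ (M 1 i) * M 1 j
      + starRingEnd ℂ (M 0 i) * M 2 j = matJ i j := by
  rw [← hM.2]
  simp [matJ, Matrix.mul_apply, Fin.sum_univ_three]

lemma inU21.upperTriangular_relations {M : Matrix (Fin 3) (Fin 3) ℂ} (hM : inU21 M)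
    (h10 : M 1 0 = 0) (h20 : M 2 0 = 0) :
    M 2 1 = 0 ∧ starRingEnd ℂ (M 0 0) * M 2 2 = 1 ∧ starRingEnd ℂ (M 1 1) * M 1 1 = 1 ∧
      starRingEnd ℂ (M 2 2) * M 0 1 + starRingEnd ℂ (M 1 2) * M 1 1 = 0 ∧
      starRingEnd ℂ (M 2 2) * M 0 2 + starRingEnd ℂ (M 1 2) * M 1 2
        + starRingEnd ℂ (M 0 2) * M 2 2 = 0 := by
  have e02 : starRingEnd ℂ (M 0 0) * M 2 2 = 1 := by
    simpa [h10, h20, matJ] using hM.apply_eq 0 2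
  have h21 : M 2 1 = 0 := by
    have e01 : starRingEnd ℂ (M 0 0) * M 2 1 = 0 := by
      simpa [h10, h20, matJ] using hM.apply_eq 0 1
    exact (mul_eq_zero.1 e01).resolve_left (left_ne_zero_of_mul_eq_one e02)
  refine ⟨h21, e02, ?_, ?_, ?_⟩
  · simpa [h21, matJ] using hM.apply_eq 1 1
  · simpa [h21, matJ] using hM.apply_eq 2 1
  · simpa [matJ] using hM.apply_eq 2 2

lemma diagonal_sign_eq_one_or_R₁ {δ : ℂ} (hδ : δ = 1 ∨ δ = -1) :
    diagonal ![1, δ, 1] = 1 ∨ diagonal ![1, δ, 1] = R₁ := by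
  rcases hδ with rfl | rfl <;> simp [R₁, diagonal_fin_three, one_fin_three]

theorem GammaS11.exists_eq_smul_mul_heisenberg {M : Matrix (Fin 3) (Fin 3) ℂ} (hM : GammaS11 M)
    (h10 : M 1 0 = 0) (h20 : M 2 0 = 0) :
    ∃ (ε z t : ℂ) (A : Matrix (Fin 3) (Fin 3) ℂ), (ε = 1 ∨ ε = -1) ∧ (A = 1 ∨ A = R₁) ∧
      IsLatticeTranslation z t ∧ M = ε • (A * heisenberg z t) := by
  obtain ⟨hU, mem00, -, mem11, mem12, mem22, mem02, -⟩ := hM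
  obtain ⟨h21, e02, e11, e21, e22⟩ := hU.upperTriangular_relations h10 h20
  have sign00 := eq_one_or_neg_one_of_conj_mul mem00 mem22 e02
  have sign11 := eq_one_or_neg_one_of_conj_mul mem11 mem11 e11
  have h22 : M 2 2 = M 0 0 := by
    rcases sign00 with h | h <;> simpa [h, neg_eq_iff_eq_neg] using e02
  have h01 : M 0 1 = -(M 0 0 * M 1 1 * starRingEnd ℂ (M 1 2)) := by
    rw [h22] at e21
    rcases sign00 with h | h <;> simp only [h, map_neg, map_one] at e21 ⊢
    · linear_combination e21
    · linear_combination -e21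
  refine ⟨M 0 0, M 1 1 * M 1 2, M 0 0 * M 0 2, diagonal ![1, M 0 0 * M 1 1, 1], sign00,
    diagonal_sign_eq_one_or_R₁ ?_, ⟨mul_mem mem11 mem12, ?_, ?_⟩, ?_⟩
  · rcases sign00 with h | h <;> rcases sign11 with h' | h' <;> simp [h, h']
  · rw [mul_left_comm]
    exact mul_mem mem00 mem02
  · rw [h22] at e22
    rcases sign00 with h | h <;> simp only [h, map_mul, map_neg, map_one] at e22 ⊢ <;>
      linear_combination e22 + starRingEnd ℂ (M 1 2) * M 1 2 * e11
  · rcases sign00 with h | h <;> rcases sign11 with h' | h' <;> ext i j <;>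
      fin_cases i <;> fin_cases j <;>
      simp [heisenberg, Matrix.mul_apply, Fin.sum_univ_three, h, h', h01, h10, h20, h21, h22]

/-- The stabilizer of `q_∞` in `Γ_s^(11)` is generated, modulo `±I`, by `R₁, R₂, R₃, T`. -/
theorem gammaS11_stabilizer_generated (M : Matrix (Fin 3) (Fin 3) ℂ) (hM : GammaS11 M)
    (h21 : M 1 0 = 0) (h31 : M 2 0 = 0) :
    ∃ (ε : ℂ) (L : List (Matrix (Fin 3) (Fin 3) ℂ)),
      (ε = 1 ∨ ε = -1) ∧
      (∀ A ∈ L, A ∈ ({R₁, R₂, R₃, T, R₁⁻¹, R₂⁻¹, R₃⁻¹, T⁻¹} :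
        Set (Matrix (Fin 3) (Fin 3) ℂ))) ∧
      M = ε • L.prod := by
  obtain ⟨ε, z, t, A, hε, hA, hzt, rfl⟩ := hM.exists_eq_smul_mul_heisenberg h21 h31
  have A_mem : A ∈ generatedMonoid := by
    rcases hA with rfl | rfl
    · exact one_mem _
    · exact mem_generatedMonoid (by simp [generators])
  obtain ⟨L, hL, hprod⟩ :=
    Submonoid.exists_list_of_mem_closure (mul_mem A_mem hzt.heisenberg_mem)
  exact ⟨ε, L, hε, hL, by rw [hprod]⟩
end
end
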